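/- As a → ∞ (a real), the supremum over x > 0 of G_a(x)/Γ(a,x) tends to ∞, and the supremum over x > 0 of Γ(a,x)/g_a(x) tends to ∞. -/

import Mathlib

/-!
Both suprema are finite for `a ≥ 2` (so that `sSup` is the genuine supremum), and each is bounded
below by its value at a well-chosen point.

*First ratio.* Since `(x+b)^a - x^a ≥ b (x+b)^(a-1)`, `Γ(a,x) ≤ Γ(a)` and
`b_a^(a-1) = Γ(a+1) = a Γ(a)`, one has `G_a(x)/Γ(a,x) ≥ (1 + x/b_a)^(a-1) e^(-x)`. At `x = b_a` this
is `2^(a-1) e^(-b_a)`. The estimate `t ≤ λu e^(t/(λu) - 1)`, with `u = a - 1` and `λ = 3/2`, inserted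
in the Gamma integral gives `Γ(a+1) ≤ 9 (3u/(2e))^u`, hence `b_a ≤ 0.65 (a-1)` for large `a`. As
`0.65 < log 2`, the value at `b_a` tends to infinity.

*Second ratio.* For a fixed `x`, `(x+2)^a = o(Γ(a))` as `a → ∞`, so `Γ(a,x) ~ Γ(a)` and
`g_a(x) ~ Γ(a) e^(-x)`; the ratio at `x` tends to `e^x`, which is as large as desired. Only the cruder
lower bound `e^x / 3` is used.

Finiteness follows from `x^(a-1) e^(-x) ≤ Γ(a,x) ≤ 2^(a-1) (x^(a-1) + Γ(a)) e^(-x)`, Bernoulli's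
inequality and superadditivity of `t ↦ t^a`.
-/

open Real Filter Set

/-- Upper incomplete gamma function `Γ(a,x) = ∫_x^∞ t^(a-1) e^(-t) dt`. -/
noncomputable def incGamma (a x : ℝ) : ℝ := ∫ t in Set.Ioi x, t ^ (a - 1) * Real.exp (-t)

/-- `b_a = Γ(a+1)^(1/(a-1))` for `a ≠ 1`, and `b_1 = e^(1-γ)`. -/
noncomputable def bCoef (a : ℝ) : ℝ :=
  if a = 1 then Real.exp (1 - Real.eulerMascheroniConstant)
  else Real.Gamma (a + 1) ^ (1 / (a - 1))

/-- `G_a(x) = ((x+b_a)^a - x^a) e^(-x) / (a b_a)`. -/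
noncomputable def Gbound (a x : ℝ) : ℝ :=
  ((x + bCoef a) ^ a - x ^ a) * Real.exp (-x) / (a * bCoef a)

/-- `g_a(x) = (((x+2)^a - x^a - 2^a)/(2a) + Γ(a)) e^(-x)`. -/
noncomputable def gbound (a x : ℝ) : ℝ :=
  (((x + 2) ^ a - x ^ a - (2 : ℝ) ^ a) / (2 * a) + Real.Gamma a) * Real.exp (-x)

/-- `g_a^lo(x) = x^a e^(-x) (x-a-1) / ((x-a)^2 + a)`. -/
noncomputable def gLo (a x : ℝ) : ℝ :=
  x ^ a * Real.exp (-x) * (x - a - 1) / ((x - a) ^ 2 + a)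

/-- `g_a^hi(x) = x^a e^(-x) / (x-a)`. -/
noncomputable def gHi (a x : ℝ) : ℝ := x ^ a * Real.exp (-x) / (x - a)

open MeasureTheory

/-! ### Bounds for the incomplete gamma function -/

lemma integrableOn_gammaIntegrand {a : ℝ} (ha : 0 < a) :
    IntegrableOn (fun t : ℝ => t ^ (a - 1) * Real.exp (-t)) (Ioi 0) := by
  simpa [mul_comm] using Real.GammaIntegral_convergent ha

lemma gamma_eq_integral_swap {a : ℝ} (ha : 0 < a) :
    Real.Gamma a = ∫ t in Ioi (0 : ℝ), t ^ (a - 1) * Real.exp (-t) := by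
  rw [Real.Gamma_eq_integral ha]
  simp [mul_comm]

lemma incGamma_le_gamma {a x : ℝ} (ha : 0 < a) (hx : 0 < x) : incGamma a x ≤ Real.Gamma a := by
  rw [gamma_eq_integral_swap ha, incGamma]
  refine setIntegral_mono_set (integrableOn_gammaIntegrand ha) ?_ (Ioi_subset_Ioi hx.le).eventuallyLE
  refine (ae_restrict_iff' measurableSet_Ioi).2 (Eventually.of_forall fun t ht => ?_)
  have : (0 : ℝ) < t := ht
  simp only [Pi.zero_apply]
  positivity

lemma le_incGamma {a x : ℝ} (ha : 1 ≤ a) (hx : 0 < x) :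
    x ^ (a - 1) * Real.exp (-x) ≤ incGamma a x := by
  rw [← integral_exp_neg_Ioi x, ← integral_const_mul, incGamma]
  refine setIntegral_mono_on ((integrableOn_exp_neg_Ioi x).const_mul _)
    ((integrableOn_gammaIntegrand (by linarith)).mono_set (Ioi_subset_Ioi hx.le))
    measurableSet_Ioi fun t ht => ?_
  have ht' : x < t := ht
  have := Real.rpow_le_rpow hx.le ht'.le (sub_nonneg.2 ha)
  gcongr

/-- The complementary integral over `(0, x]` has integrand at most `x^(a-1)`. -/
lemma gamma_sub_le_incGamma {a x : ℝ} (ha : 1 ≤ a) (hx : 0 < x) :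
    Real.Gamma a - x ^ a ≤ incGamma a x := by
  have hI := integrableOn_gammaIntegrand (a := a) (by linarith)
  have hsplit : Real.Gamma a =
      (∫ t in Ioc 0 x, t ^ (a - 1) * Real.exp (-t)) + incGamma a x := by
    rw [gamma_eq_integral_swap (by linarith), incGamma, ← Ioc_union_Ioi_eq_Ioi hx.le]
    exact setIntegral_union (Ioc_disjoint_Ioi le_rfl) measurableSet_Ioi
      (hI.mono_set Ioc_subset_Ioi_self) (hI.mono_set (Ioi_subset_Ioi hx.le))
  have hle : (∫ t in Ioc 0 x, t ^ (a - 1) * Real.exp (-t)) ≤ ∫ t in Ioc 0 x, x ^ (a - 1) := by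
    refine setIntegral_mono_on (hI.mono_set Ioc_subset_Ioi_self) (by simp)
      measurableSet_Ioc fun t ht => ?_
    have h1 := Real.rpow_le_rpow ht.1.le ht.2 (sub_nonneg.2 ha)
    have h2 : Real.exp (-t) ≤ 1 := Real.exp_le_one_iff.2 (by linarith [ht.1])
    have h3 : 0 ≤ x ^ (a - 1) := by positivity
    nlinarith [Real.exp_pos (-t)]
  have hc : (∫ t in Ioc 0 x, x ^ (a - 1)) = x ^ a := by
    rw [setIntegral_const]
    simp [hx.le]
    rw [Real.rpow_sub_one hx.ne']
    field_simp
  linarith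

/-- Substituting `t = s + x` and using `(s+x)^p ≤ 2^p (s^p + x^p)`. -/
lemma incGamma_le {a x : ℝ} (ha : 1 ≤ a) (hx : 0 < x) :
    incGamma a x ≤ 2 ^ (a - 1) * (x ^ (a - 1) + Real.Gamma a) * Real.exp (-x) := by
  have hp : 0 ≤ a - 1 := sub_nonneg.2 ha
  have hI := integrableOn_gammaIntegrand (a := a) (by linarith)
  have hpre : (fun s : ℝ => s + x) ⁻¹' Ioi x = Ioi 0 := by ext; simp
  have htr : incGamma a x = ∫ s in Ioi (0 : ℝ), (s + x) ^ (a - 1) * Real.exp (-(s + x)) := by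
    rw [incGamma, ← (measurePreserving_add_right volume x).setIntegral_preimage_emb
      (measurableEmbedding_addRight x) (fun t => t ^ (a - 1) * Real.exp (-t)) (Ioi x), hpre]
  have htrI : IntegrableOn (fun s : ℝ => (s + x) ^ (a - 1) * Real.exp (-(s + x))) (Ioi 0) := by
    have := ((measurePreserving_add_right volume x).integrableOn_comp_preimage
      (measurableEmbedding_addRight x)).2 (hI.mono_set (Ioi_subset_Ioi hx.le))
    rwa [hpre] at this
  have hE := (integrableOn_exp_neg_Ioi 0).const_mul (x ^ (a - 1))
  have hR : 2 ^ (a - 1) * (x ^ (a - 1) + Real.Gamma a) * Real.exp (-x) =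
      ∫ s in Ioi (0 : ℝ), (2 ^ (a - 1) * Real.exp (-x)) *
        (x ^ (a - 1) * Real.exp (-s) + s ^ (a - 1) * Real.exp (-s)) := by
    rw [integral_const_mul, integral_add hE hI, integral_const_mul, integral_exp_neg_Ioi_zero,
      ← gamma_eq_integral_swap (by linarith)]
    ring
  rw [htr, hR]
  refine setIntegral_mono_on htrI ((hE.add hI).const_mul _) measurableSet_Ioi fun s hs => ?_
  have hs' : (0 : ℝ) < s := hs
  have hpow : (s + x) ^ (a - 1) ≤ 2 ^ (a - 1) * (x ^ (a - 1) + s ^ (a - 1)) := by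
    have hx0 : 0 ≤ x ^ (a - 1) := by positivity
    have hs0 : 0 ≤ s ^ (a - 1) := by positivity
    rcases le_total s x with h | h
    · calc (s + x) ^ (a - 1) ≤ (2 * x) ^ (a - 1) :=
            Real.rpow_le_rpow (by linarith) (by linarith) hp
        _ = 2 ^ (a - 1) * x ^ (a - 1) := Real.mul_rpow (by norm_num) hx.le
        _ ≤ _ := by gcongr; linarith
    · calc (s + x) ^ (a - 1) ≤ (2 * s) ^ (a - 1) :=
            Real.rpow_le_rpow (by linarith) (by linarith) hp
        _ = 2 ^ (a - 1) * s ^ (a - 1) := Real.mul_rpow (by norm_num) hs'.le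
        _ ≤ _ := by gcongr; linarith
  rw [neg_add, Real.exp_add]
  calc (s + x) ^ (a - 1) * (Real.exp (-s) * Real.exp (-x))
      ≤ 2 ^ (a - 1) * (x ^ (a - 1) + s ^ (a - 1)) * (Real.exp (-s) * Real.exp (-x)) := by gcongr
    _ = _ := by ring

/-! ### Increments of the power function -/

lemma mul_rpow_le_rpow_sub {a x b : ℝ} (ha : 1 ≤ a) (hx : 0 < x) (hb : 0 < b) :
    b * (x + b) ^ (a - 1) ≤ (x + b) ^ a - x ^ a := by
  have h1 : x ^ (a - 1) ≤ (x + b) ^ (a - 1) :=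
    Real.rpow_le_rpow hx.le (by linarith) (sub_nonneg.2 ha)
  have e1 : x ^ a = x * x ^ (a - 1) := by
    rw [Real.rpow_sub_one hx.ne']; field_simp
  have e2 : (x + b) ^ a = (x + b) * (x + b) ^ (a - 1) := by
    rw [Real.rpow_sub_one (by positivity)]; field_simp
  rw [e1, e2]
  nlinarith

/-- Bernoulli's inequality applied to `(x / (x+b))^a = (1 - b/(x+b))^a`. -/
lemma rpow_sub_le_mul_rpow {a x b : ℝ} (ha : 1 ≤ a) (hx : 0 < x) (hb : 0 < b) :
    (x + b) ^ a - x ^ a ≤ a * b * (x + b) ^ (a - 1) := by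
  have hxb : 0 < x + b := by linarith
  have h := one_add_mul_self_le_rpow_one_add (s := -b / (x + b))
    (by rw [le_div_iff₀ hxb]; linarith) ha
  have e : 1 + -b / (x + b) = x / (x + b) := by field_simp; ring
  rw [e, Real.div_rpow hx.le hxb.le, le_div_iff₀ (by positivity)] at h
  rw [Real.rpow_sub_one hxb.ne']
  have : (1 + a * (-b / (x + b))) * (x + b) ^ a =
      (x + b) ^ a - a * b * ((x + b) ^ a / (x + b)) := by field_simp; ring
  linarith

/-! ### The coefficient `b_a` -/

lemma bCoef_pos {a : ℝ} (ha : 2 ≤ a) : 0 < bCoef a := by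
  rw [bCoef, if_neg (by linarith)]
  exact Real.rpow_pos_of_pos (Real.Gamma_pos_of_pos (by linarith)) _

lemma bCoef_rpow {a : ℝ} (ha : 2 ≤ a) : bCoef a ^ (a - 1) = Real.Gamma (a + 1) := by
  rw [bCoef, if_neg (by linarith), ← Real.rpow_mul (Real.Gamma_pos_of_pos (by linarith)).le,
    one_div_mul_cancel (by linarith), Real.rpow_one]

/-- From `t ≤ (3u/2) e^(2t/(3u) - 1)` under the integral `Γ(u+2) = ∫ t^u · t e^(-t) dt`; the factor
`9` is `∫ t e^(-t/3) dt`. -/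
lemma gamma_add_two_le {u : ℝ} (hu : 0 < u) :
    Real.Gamma (u + 2) ≤ 9 * (3 / 2 * Real.exp (-1) * u) ^ u := by
  have h9 : (∫ t in Ioi (0 : ℝ), t ^ ((2 : ℝ) - 1) * Real.exp (-(1 / 3 * t))) = 9 := by
    rw [Real.integral_rpow_mul_exp_neg_mul_Ioi (by norm_num) (by norm_num)]
    norm_num [Real.Gamma_two]
  have hI : IntegrableOn (fun t : ℝ => t ^ ((2 : ℝ) - 1) * Real.exp (-(1 / 3 * t))) (Ioi 0) := by
    by_contra h
    rw [integral_undef h] at h9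
    norm_num at h9
  rw [mul_comm, ← h9, ← integral_const_mul, gamma_eq_integral_swap (by linarith)]
  refine setIntegral_mono_on (integrableOn_gammaIntegrand (by linarith)) (hI.const_mul _)
    measurableSet_Ioi fun t ht => ?_
  have ht : (0 : ℝ) < t := ht
  have h1 : t ≤ (3 / 2 * Real.exp (-1) * u) * Real.exp (2 * t / (3 * u)) := by
    have := Real.add_one_le_exp (2 * t / (3 * u) - 1)
    rw [sub_add_cancel, div_le_iff₀ (by positivity), sub_eq_add_neg, Real.exp_add] at this
    linarith
  have h2 : t ^ u ≤ (3 / 2 * Real.exp (-1) * u) ^ u * Real.exp (2 / 3 * t) := by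
    refine (Real.rpow_le_rpow ht.le h1 hu.le).trans (le_of_eq ?_)
    rw [Real.mul_rpow (by positivity) (by positivity), ← Real.exp_mul]
    congr 2
    field_simp
  have e1 : t ^ (u + 2 - 1) = t ^ u * t := by
    rw [show u + 2 - 1 = u + 1 by ring, Real.rpow_add_one ht.ne']
  have e2 : Real.exp (-(1 / 3 * t)) = Real.exp (2 / 3 * t) * Real.exp (-t) := by
    rw [← Real.exp_add]; congr 1; ring
  rw [e1, e2, show (2 : ℝ) - 1 = 1 by norm_num, Real.rpow_one]
  calc t ^ u * t * Real.exp (-t)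
      ≤ (3 / 2 * Real.exp (-1) * u) ^ u * Real.exp (2 / 3 * t) * t * Real.exp (-t) := by gcongr
    _ = _ := by ring

/-- The true asymptotic slope of `b_a` is `1/e`; all that matters is a slope below `log 2`. -/
lemma eventually_bCoef_le : ∀ᶠ a : ℝ in atTop, bCoef a ≤ 0.65 * (a - 1) := by
  have hlim : Tendsto (fun a : ℝ => (1.1 : ℝ) ^ (a - 1)) atTop atTop :=
    (tendsto_rpow_atTop_of_base_gt_one _ (by norm_num)).comp
      (tendsto_atTop_add_const_right _ (-1) tendsto_id)
  filter_upwards [hlim.eventually_ge_atTop 9, eventually_ge_atTop 2] with a h9 ha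
  have hu : 0 < a - 1 := by linarith
  have he : Real.exp (-1) ≤ 0.39 := by
    rw [Real.exp_neg, inv_le_comm₀ (Real.exp_pos _) (by norm_num)]
    exact le_trans (by norm_num) Real.exp_one_gt_d9.le
  have hpow : bCoef a ^ (a - 1) ≤ (0.65 * (a - 1)) ^ (a - 1) := by
    rw [bCoef_rpow ha, show a + 1 = (a - 1) + 2 by ring]
    calc Real.Gamma (a - 1 + 2) ≤ 9 * (3 / 2 * Real.exp (-1) * (a - 1)) ^ (a - 1) :=
          gamma_add_two_le hu
      _ ≤ 1.1 ^ (a - 1) * (3 / 2 * Real.exp (-1) * (a - 1)) ^ (a - 1) := by gcongr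
      _ = (1.1 * (3 / 2 * Real.exp (-1) * (a - 1))) ^ (a - 1) :=
          (Real.mul_rpow (by norm_num) (by positivity)).symm
      _ ≤ _ := by
          refine Real.rpow_le_rpow (by positivity) ?_ hu.le
          nlinarith
  exact (Real.rpow_le_rpow_iff (bCoef_pos ha).le (by linarith) hu).1 hpow

/-! ### The ratio `G_a / Γ(a,·)` -/

lemma incGamma_pos {a x : ℝ} (ha : 1 ≤ a) (hx : 0 < x) : 0 < incGamma a x :=
  lt_of_lt_of_le (by positivity) (le_incGamma ha hx)

lemma bddAbove_Gbound_ratio {a : ℝ} (ha : 2 ≤ a) :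
    BddAbove ((fun x : ℝ => Gbound a x / incGamma a x) '' Ioi 0) := by
  have hb := bCoef_pos ha
  have ha1 : 1 ≤ a := by linarith
  have hp : 0 ≤ a - 1 := by linarith
  refine ⟨Real.exp 1 * (1 + bCoef a) ^ (a - 1), ?_⟩
  rintro _ ⟨x, hx, rfl⟩
  have hx : 0 < x := hx
  simp only
  rw [div_le_iff₀ (incGamma_pos ha1 hx)]
  have hG : Gbound a x ≤ (x + bCoef a) ^ (a - 1) * Real.exp (-x) := by
    rw [Gbound, div_le_iff₀ (by positivity)]
    calc _ ≤ a * bCoef a * (x + bCoef a) ^ (a - 1) * Real.exp (-x) := by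
          gcongr; exact rpow_sub_le_mul_rpow ha1 hx hb
      _ = _ := by ring
  refine hG.trans ?_
  have he1 : 1 ≤ Real.exp 1 := Real.one_le_exp (by norm_num)
  rcases le_total x 1 with h | h
  · -- for `x ≤ 1`, `Γ(a,x)` is at least `Γ(a,1) ≥ e⁻¹`
    have hinc : Real.exp (-1) ≤ incGamma a x := by
      have h1 := le_incGamma ha1 one_pos
      rw [Real.one_rpow, one_mul] at h1
      refine h1.trans ?_
      rw [incGamma, incGamma]
      refine setIntegral_mono_set ((integrableOn_gammaIntegrand (by linarith)).mono_set
        (Ioi_subset_Ioi hx.le)) ?_ (Ioi_subset_Ioi h).eventuallyLE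
      refine (ae_restrict_iff' measurableSet_Ioi).2 (Eventually.of_forall fun t ht => ?_)
      have : 0 < t := hx.trans ht
      simp only [Pi.zero_apply]
      positivity
    calc (x + bCoef a) ^ (a - 1) * Real.exp (-x) ≤ (1 + bCoef a) ^ (a - 1) * 1 := by
          gcongr
          exact Real.exp_le_one_iff.2 (by linarith)
      _ = Real.exp 1 * (1 + bCoef a) ^ (a - 1) * Real.exp (-1) := by
          rw [mul_right_comm, ← Real.exp_add]; simp
      _ ≤ _ := by gcongr
  · calc (x + bCoef a) ^ (a - 1) * Real.exp (-x)
        ≤ ((1 + bCoef a) * x) ^ (a - 1) * Real.exp (-x) := by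
          gcongr; nlinarith
      _ = 1 * (1 + bCoef a) ^ (a - 1) * (x ^ (a - 1) * Real.exp (-x)) := by
          rw [Real.mul_rpow (by positivity) hx.le]; ring
      _ ≤ _ := by
          gcongr
          exact le_incGamma ha1 hx

lemma le_Gbound_ratio {a : ℝ} (ha : 2 ≤ a) :
    2 ^ (a - 1) * Real.exp (-bCoef a) ≤ Gbound a (bCoef a) / incGamma a (bCoef a) := by
  have hb := bCoef_pos ha
  have ha1 : 1 ≤ a := by linarith
  rw [le_div_iff₀ (incGamma_pos ha1 hb), Gbound, le_div_iff₀ (by positivity)]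
  calc 2 ^ (a - 1) * Real.exp (-bCoef a) * incGamma a (bCoef a) * (a * bCoef a)
      ≤ 2 ^ (a - 1) * Real.exp (-bCoef a) * Real.Gamma a * (a * bCoef a) := by
        gcongr; exact incGamma_le_gamma (by linarith) hb
    _ = 2 ^ (a - 1) * Real.exp (-bCoef a) * bCoef a * (a * Real.Gamma a) := by ring
    _ = bCoef a * (bCoef a + bCoef a) ^ (a - 1) * Real.exp (-bCoef a) := by
        rw [← Real.Gamma_add_one (by linarith), ← bCoef_rpow ha, ← two_mul,
          Real.mul_rpow (by norm_num) hb.le]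
        ring
    _ ≤ _ := by gcongr; exact mul_rpow_le_rpow_sub ha1 hb hb

/-! ### The ratio `Γ(a,·) / g_a` -/

lemma gamma_le_gbound_factor {a x : ℝ} (ha : 2 ≤ a) (hx : 0 < x) :
    Real.Gamma a ≤ ((x + 2) ^ a - x ^ a - (2 : ℝ) ^ a) / (2 * a) + Real.Gamma a := by
  have h := Real.add_rpow_le_rpow_add hx.le (zero_le_two (α := ℝ)) (p := a) (by linarith)
  have : 0 ≤ ((x + 2) ^ a - x ^ a - (2 : ℝ) ^ a) / (2 * a) :=
    div_nonneg (by linarith) (by linarith)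
  linarith

lemma bddAbove_gbound_ratio {a : ℝ} (ha : 2 ≤ a) :
    BddAbove ((fun x : ℝ => incGamma a x / gbound a x) '' Ioi 0) := by
  have ha1 : 1 ≤ a := by linarith
  have hΓ : 0 < Real.Gamma a := Real.Gamma_pos_of_pos (by linarith)
  refine ⟨2 ^ (a - 1) * (a + 2 ^ a / (2 * Real.Gamma a) + 1), ?_⟩
  rintro _ ⟨x, hx, rfl⟩
  have hx : 0 < x := hx
  have hP := gamma_le_gbound_factor ha hx
  simp only [gbound]
  set P := ((x + 2) ^ a - x ^ a - (2 : ℝ) ^ a) / (2 * a) + Real.Gamma a with hPdef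
  have hP0 : 0 < P := hΓ.trans_le hP
  -- the polynomial part of `g_a` dominates `x^(a-1)/a` up to a constant
  have hPx : x ^ (a - 1) ≤ a * P + 2 ^ a / 2 := by
    have h1 := mul_rpow_le_rpow_sub ha1 hx two_pos
    have h2 : x ^ (a - 1) ≤ (x + 2) ^ (a - 1) :=
      Real.rpow_le_rpow hx.le (by linarith) (by linarith)
    have h3 : a * P = ((x + 2) ^ a - x ^ a - (2 : ℝ) ^ a) / 2 + a * Real.Gamma a := by
      rw [hPdef]; field_simp
    have h4 : 0 ≤ a * Real.Gamma a := by positivity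
    linarith
  have hD : (2 : ℝ) ^ a / 2 ≤ 2 ^ a / (2 * Real.Gamma a) * P := by
    calc (2 : ℝ) ^ a / 2 = 2 ^ a / (2 * Real.Gamma a) * Real.Gamma a := by field_simp
      _ ≤ _ := by gcongr
  rw [div_le_iff₀ (by positivity)]
  calc incGamma a x ≤ 2 ^ (a - 1) * (x ^ (a - 1) + Real.Gamma a) * Real.exp (-x) :=
        incGamma_le ha1 hx
    _ ≤ 2 ^ (a - 1) * ((a + 2 ^ a / (2 * Real.Gamma a) + 1) * P) * Real.exp (-x) := by
        gcongr
        linarith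
    _ = _ := by ring

/-- `Γ(a) ≥ Γ(a, 2R) ≥ (2R)^(a-1) e^(-2R)` outgrows `R^a`. -/
lemma eventually_rpow_le_gamma {R : ℝ} (hR : 0 < R) :
    ∀ᶠ a : ℝ in atTop, R ^ a ≤ Real.Gamma a / 2 := by
  have hlim := tendsto_rpow_atTop_of_base_gt_one 2 (by norm_num)
  filter_upwards [hlim.eventually_ge_atTop (4 * R * Real.exp (2 * R)), eventually_ge_atTop 2]
    with a h ha
  have h1 := (le_incGamma (a := a) (by linarith) (show 0 < 2 * R by linarith)).trans
    (incGamma_le_gamma (by linarith) (by linarith))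
  have h2 : 2 * R ^ a ≤ (2 * R) ^ (a - 1) * Real.exp (-(2 * R)) := by
    rw [Real.rpow_sub_one (by positivity), Real.mul_rpow (by norm_num) hR.le, Real.exp_neg,
      ← div_eq_mul_inv, le_div_iff₀ (Real.exp_pos _), le_div_iff₀ (by positivity)]
    calc 2 * R ^ a * Real.exp (2 * R) * (2 * R) = (4 * R * Real.exp (2 * R)) * R ^ a := by ring
      _ ≤ _ := by gcongr
  linarith

lemma eventually_le_gbound_ratio {x : ℝ} (hx : 0 < x) :
    ∀ᶠ a : ℝ in atTop, Real.exp x / 3 ≤ incGamma a x / gbound a x := by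
  filter_upwards [eventually_rpow_le_gamma (show 0 < x + 2 by linarith), eventually_ge_atTop 2]
    with a h ha
  have hΓ : 0 < Real.Gamma a := Real.Gamma_pos_of_pos (by linarith)
  have hP := gamma_le_gbound_factor ha hx
  simp only [gbound]
  set P := ((x + 2) ^ a - x ^ a - (2 : ℝ) ^ a) / (2 * a) + Real.Gamma a with hPdef
  have hxa : x ^ a ≤ (x + 2) ^ a := Real.rpow_le_rpow hx.le (by linarith) (by linarith)
  have hinc := gamma_sub_le_incGamma (a := a) (by linarith) hx
  have hPle : P ≤ 3 / 2 * Real.Gamma a := by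
    have h0 : 0 ≤ x ^ a := by positivity
    have h2 : (0 : ℝ) ≤ 2 ^ a := by positivity
    have : ((x + 2) ^ a - x ^ a - (2 : ℝ) ^ a) / (2 * a) ≤ Real.Gamma a / 2 := by
      rw [div_le_iff₀ (by positivity)]
      nlinarith
    linarith
  rw [le_div_iff₀ (mul_pos (hΓ.trans_le hP) (Real.exp_pos _))]
  calc Real.exp x / 3 * (P * Real.exp (-x)) = P / 3 := by
        rw [Real.exp_neg]; field_simp
    _ ≤ _ := by linarith

theorem stmt9 :
    Filter.Tendsto (fun a : ℝ => sSup ((fun x : ℝ => Gbound a x / incGamma a x) '' Set.Ioi 0))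
      Filter.atTop Filter.atTop ∧
    Filter.Tendsto (fun a : ℝ => sSup ((fun x : ℝ => incGamma a x / gbound a x) '' Set.Ioi 0))
      Filter.atTop Filter.atTop := by
  constructor
  · have hlim : Tendsto (fun a : ℝ => (0.04 : ℝ) * (a - 1)) atTop atTop :=
      (tendsto_atTop_add_const_right _ (-1) tendsto_id).const_mul_atTop (by norm_num)
    refine tendsto_atTop_mono' _ ?_ (Real.tendsto_exp_atTop.comp hlim)
    filter_upwards [eventually_bCoef_le, eventually_ge_atTop 2] with a hb ha
    refine le_trans ?_ ((le_Gbound_ratio ha).trans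
      (le_csSup (bddAbove_Gbound_ratio ha) ⟨bCoef a, bCoef_pos ha, rfl⟩))
    simp only [Function.comp]
    rw [Real.rpow_def_of_pos two_pos, ← Real.exp_add]
    have := Real.log_two_gt_d9
    exact Real.exp_le_exp.2 (by nlinarith)
  · rw [tendsto_atTop]
    intro C
    obtain ⟨x, hxC, hx⟩ := ((Real.tendsto_exp_atTop.eventually_ge_atTop (3 * C)).and
      (eventually_gt_atTop 0)).exists
    filter_upwards [eventually_le_gbound_ratio hx, eventually_ge_atTop 2] with a h ha
    have := le_csSup (bddAbove_gbound_ratio ha) ⟨x, hx, rfl⟩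
    simp only at this
    linarith
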